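/- Let m be odd, * the involution x* = −x on A_m, ψ a non-trivial character of the additive group of k, and ψ̲ = ψ ∘ tr, a non-trivial character of the additive group of A_m. Let Q(t) = t* t, B_Q(t,s) = t* s + t s*, let S(a) = Σ_{u ∈ A_m} ψ̲(a·Q(u)) denote the Gauss sum, and set α(a) = S(a)/S(1) for a ∈ A_m^×. Let W be the ℂ-vector space of all complex-valued functions on A_m. Then there exists a group homomorphism ρ : SL_*(2,A_m) → GL(W) (the generalized Weil representation) such that for all f ∈ W, a ∈ A_m: (i) (ρ(h(t))f)(a) = α(t) f(a t) for t ∈ A_m^×; (ii) (ρ(u(b))f)(a) = ψ̲(b·Q(a)) f(a) for b ∈ A_m^s; (iii) (ρ(w)f)(a) = (α(−1)/S(1)) Σ_{c ∈ A_m} ψ̲(B_Q(a,c)) f(c). -/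

import Mathlib

open Polynomial

set_option synthInstance.maxHeartbeats 1000000

/-- The truncated polynomial algebra `A_m = k[x]/⟨x^m⟩`. -/
abbrev TruncPoly (k : Type*) [Field k] (m : ℕ) :=
  Polynomial k ⧸ Ideal.span {(Polynomial.X : Polynomial k) ^ m}

/-- The class of `x` in `A_m = k[x]/⟨x^m⟩`. -/
noncomputable def xbar (k : Type*) [Field k] (m : ℕ) : TruncPoly k m :=
  Ideal.Quotient.mk _ (Polynomial.X : Polynomial k)

/-- The set `SL_*(2,A)` for a commutative ring `A` equipped with an involution `σ`. -/
def SLstarSet {A : Type*} [CommRing A] (σ : A → A) : Set (Matrix (Fin 2) (Fin 2) A) :=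
  {g | g 0 0 * σ (g 0 1) = g 0 1 * σ (g 0 0) ∧
       g 1 0 * σ (g 1 1) = g 1 1 * σ (g 1 0) ∧
       σ (g 0 0) * g 1 0 = σ (g 1 0) * g 0 0 ∧
       σ (g 0 1) * g 1 1 = σ (g 1 1) * g 0 1 ∧
       g 0 0 * σ (g 1 1) - g 0 1 * σ (g 1 0) = 1 ∧
       σ (g 0 0) * g 1 1 - σ (g 1 0) * g 0 1 = 1}

/-- The Bruhat generator `h(t) = [[t, 0],[0, (t*)⁻¹]]`. -/
def hM {A : Type*} [CommRing A] (σ : A →* A) (t : Aˣ) : Matrix (Fin 2) (Fin 2) A :=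
  !![(t : A), 0; 0, ((Units.map σ t)⁻¹ : Aˣ)]

/-- The Bruhat generator `u(s) = [[1, s],[0, 1]]`. -/
def uM {A : Type*} [CommRing A] (s : A) : Matrix (Fin 2) (Fin 2) A :=
  !![1, s; 0, 1]

/-- The Bruhat generator `w = [[0, 1],[−1, 0]]`. -/
def wM (A : Type*) [CommRing A] : Matrix (Fin 2) (Fin 2) A :=
  !![0, 1; -1, 0]

/-- The Gauss sum `S_{ψ̲∘Q}(a) = Σ_{u ∈ A_m} ψ̲(a·Q(u))`, with `Q(u) = u* u` and
`ψ̲ = ψ ∘ tr`. -/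
noncomputable def gaussS {k : Type*} [Field k] {m : ℕ} [Fintype (TruncPoly k m)]
    (σ : TruncPoly k m →ₐ[k] TruncPoly k m) (tr : TruncPoly k m →ₗ[k] k)
    (ψ : AddChar k ℂ) (a : TruncPoly k m) : ℂ :=
  ∑ u : TruncPoly k m, ψ (tr (a * (σ u * u)))

theorem germ_ext {G M : Type*} [Group G] [Monoid M] (Om : G → Prop) (r : G → M)
    (h1 : ∀ g h, Om g → Om h → Om (g * h) → r (g * h) = r g * r h)
    (h2 : ∀ g, Om g → r g * r g⁻¹ = 1)
    (hinv : ∀ g, Om g → Om g⁻¹)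
    (hB : ∀ b x, ¬ Om b → Om x → Om (b * x))
    (h3 : ∀ a b c : G, ∃ h, Om (a * h) ∧ Om (b * h) ∧ Om (c * h)) :
    ∃ ρ : G →* M, (∀ g, Om g → ρ g = r g) ∧
      (∀ g h, Om h → Om (g * h) → ρ g = r (g * h) * r h⁻¹) := by
  have key : ∀ g h h', Om h → Om (g * h) → Om h' → Om (g * h') → Om (h⁻¹ * h') →
      r (g * h') * r h'⁻¹ = r (g * h) * r h⁻¹ := by
    intro g h h' a b c d e
    have e1 : g * h' = (g * h) * (h⁻¹ * h') := by group
    have e2 : h'⁻¹ = (h⁻¹ * h')⁻¹ * h⁻¹ := by group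
    have e3 : r (g * h') = r (g * h) * r (h⁻¹ * h') := by
      rw [e1]; exact h1 _ _ b e (by rw [← e1]; exact d)
    have e4 : r h'⁻¹ = r (h⁻¹ * h')⁻¹ * r h⁻¹ := by
      rw [e2]; exact h1 _ _ (hinv _ e) (hinv _ a) (by rw [← e2]; exact hinv _ c)
    rw [e3, e4, mul_assoc, ← mul_assoc (r (h⁻¹ * h')), h2 _ e, one_mul]
  have key2 : ∀ g h h', Om h → Om (g * h) → Om h' → Om (g * h') →
      r (g * h') * r h'⁻¹ = r (g * h) * r h⁻¹ := by
    intro g h h' a b c d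
    by_cases e : Om (h⁻¹ * h')
    · exact key g h h' a b c d e
    · obtain ⟨x, x1, x2, x3⟩ := h3 1 g h'⁻¹
      rw [one_mul] at x1
      have x4 : Om (h⁻¹ * x) := by
        have := hB _ _ e x3
        rwa [show h⁻¹ * h' * (h'⁻¹ * x) = h⁻¹ * x by group] at this
      rw [← key g h x a b x1 x2 x4, ← key g h' x c d x1 x2 x3]
  choose H H1 H2 _ using fun g : G => h3 1 g g
  have H1' : ∀ g, Om (H g) := fun g => by simpa using H1 g
  have val : ∀ g h, Om h → Om (g * h) →
      r (g * H g) * r (H g)⁻¹ = r (g * h) * r h⁻¹ := fun g h a b =>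
    key2 g h (H g) a b (H1' g) (H2 g)
  refine ⟨{ toFun := fun g => r (g * H g) * r (H g)⁻¹, map_one' := ?_, map_mul' := ?_ }, ?_, ?_⟩
  · show r (1 * H 1) * r (H 1)⁻¹ = 1
    rw [one_mul, h2 _ (H1' 1)]
  · intro g g'
    show r (g * g' * H (g * g')) * r (H (g * g'))⁻¹ =
      r (g * H g) * r (H g)⁻¹ * (r (g' * H g') * r (H g')⁻¹)
    obtain ⟨x, x1, x2, x3⟩ := h3 1 g' (g * g')
    rw [one_mul] at x1
    rw [val _ x x1 x3, val g' x x1 x2, val g (g' * x) x2 (by rwa [← mul_assoc]),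
      ← mul_assoc g g' x]
    have : r (g' * x)⁻¹ * r (g' * x) = 1 := by
      have := h2 _ (hinv _ x2)
      rwa [inv_inv] at this
    rw [mul_assoc (r (g * g' * x)), ← mul_assoc (r (g' * x)⁻¹), this, one_mul]
  · intro g hg
    show r (g * H g) * r (H g)⁻¹ = r g
    obtain ⟨x, x1, x2, _⟩ := h3 1 g g
    rw [one_mul] at x1
    rw [val g x x1 x2, h1 _ _ hg x1 x2, mul_assoc, h2 _ x1, mul_one]
  · intro g h a b
    exact val g h a b

section Gen

variable {k A : Type*} [Field k] [CommRing A] [Algebra k A]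

theorem sl_closed (σ : A →ₐ[k] A) :
    ∀ g ∈ SLstarSet (⇑σ), ∀ g' ∈ SLstarSet (⇑σ), (∀ a, σ (σ a) = a) →
      g * g' ∈ SLstarSet (⇑σ) := by
  rintro g ⟨p1, p2, p3, p4, p5, p6⟩ g' ⟨q1, q2, q3, q4, q5, q6⟩ hs
  have p5' := congrArg σ p5
  have p6' := congrArg σ p6
  have q5' := congrArg σ q5
  have q6' := congrArg σ q6
  simp only [map_sub, map_mul, hs, map_one] at p5' p6' q5' q6'
  simp only [SLstarSet, Set.mem_ofPred_eq, Matrix.mul_apply, Fin.sum_univ_two, map_add, map_mul]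
  generalize σ (g 0 0) = sa at *
  generalize σ (g 0 1) = sb at *
  generalize σ (g 1 0) = sc at *
  generalize σ (g 1 1) = sd at *
  generalize σ (g' 0 0) = sa' at *
  generalize σ (g' 0 1) = sb' at *
  generalize σ (g' 1 0) = sc' at *
  generalize σ (g' 1 1) = sd' at *
  generalize g 0 0 = a at *
  generalize g 0 1 = b at *
  generalize g 1 0 = c at *
  generalize g 1 1 = d at *
  generalize g' 0 0 = a' at *
  generalize g' 0 1 = b' at *
  generalize g' 1 0 = c' at *
  generalize g' 1 1 = d' at *
  refine ⟨?_, ?_, ?_, ?_, ?_, ?_⟩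
  · linear_combination a * sa * q1 + b * sb * q2 + a * sb * q5 - b * sa * q5' + p1
  · linear_combination c * sc * q1 + d * sd * q2 + c * sd * q5 - d * sc * q5' + p2
  · linear_combination a' * sa' * p3 + c' * sc' * p4 + sa' * c' * p6 - sc' * a' * p6' + q3
  · linear_combination b' * sb' * p3 + d' * sd' * p4 + sb' * d' * p6 - sd' * b' * p6' + q4
  · linear_combination a * sc * q1 + b * sd * q2 + a * sd * q5 - b * sc * q5' + p5
  · linear_combination sa' * b' * p3 + sc' * d' * p4 + sa' * d' * p6 - sc' * b' * p6' + q6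

theorem sl_one (σ : A →ₐ[k] A) : (1 : Matrix (Fin 2) (Fin 2) A) ∈ SLstarSet (⇑σ) := by
  simp [SLstarSet]

def sadj (σ : A →ₐ[k] A) (g : Matrix (Fin 2) (Fin 2) A) : Matrix (Fin 2) (Fin 2) A :=
  !![σ (g 1 1), -σ (g 0 1); -σ (g 1 0), σ (g 0 0)]

theorem sl_adj (σ : A →ₐ[k] A) (hs : ∀ a, σ (σ a) = a) (g) (hg : g ∈ SLstarSet (⇑σ)) :
    sadj σ g ∈ SLstarSet (⇑σ) := by
  obtain ⟨p1, p2, p3, p4, p5, p6⟩ := hg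
  simp only [SLstarSet, sadj, Set.mem_ofPred_eq, Matrix.of_apply, Matrix.cons_val', Matrix.cons_val_zero,
    Matrix.cons_val_one, Matrix.cons_val_fin_one, map_neg, hs]
  refine ⟨?_, ?_, ?_, ?_, ?_, ?_⟩
  · linear_combination p4
  · linear_combination p3
  · linear_combination p2
  · linear_combination p1
  · have := congrArg σ p6
    simp only [map_sub, map_mul, hs, map_one] at this
    linear_combination this
  · have := congrArg σ p5
    simp only [map_sub, map_mul, hs, map_one] at this
    linear_combination this

theorem sadj_mul (σ : A →ₐ[k] A) (hs : ∀ a, σ (σ a) = a) (g) (hg : g ∈ SLstarSet (⇑σ)) :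
    sadj σ g * g = 1 := by
  obtain ⟨p1, p2, p3, p4, p5, p6⟩ := hg
  ext i j
  fin_cases i <;> fin_cases j <;>
    simp [sadj, Matrix.mul_apply, Fin.sum_univ_two]
  · have := congrArg σ p6
    simp only [map_sub, map_mul, hs, map_one] at this
    linear_combination this
  · linear_combination -p4
  · linear_combination p3
  · linear_combination p6

@[reducible] def slGroup (σ : A →ₐ[k] A) (hs : ∀ a, σ (σ a) = a) : Group ↥(SLstarSet (⇑σ)) :=
  letI : Mul ↥(SLstarSet (⇑σ)) := ⟨fun g g' => ⟨g.1 * g'.1, sl_closed σ g.1 g.2 g'.1 g'.2 hs⟩⟩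
  letI : One ↥(SLstarSet (⇑σ)) := ⟨⟨1, sl_one σ⟩⟩
  letI : Inv ↥(SLstarSet (⇑σ)) := ⟨fun g => ⟨sadj σ g.1, sl_adj σ hs g.1 g.2⟩⟩
  Group.ofLeftAxioms (fun a b c => Subtype.ext (mul_assoc a.1 b.1 c.1))
    (fun a => Subtype.ext (one_mul a.1))
    (fun a => Subtype.ext (sadj_mul σ hs a.1 a.2))

variable [Fintype A]

noncomputable def gS (σ : A →ₐ[k] A) (φ : AddChar A ℂ) (a : A) : ℂ := ∑ u : A, φ (a * (σ u * u))

noncomputable def wker (σ : A →ₐ[k] A) (φ : AddChar A ℂ) (g : Matrix (Fin 2) (Fin 2) A) :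
    Matrix A A ℂ := fun x y => gS σ φ (g 1 0) / (gS σ φ 1) ^ 2 *
      φ (Ring.inverse (g 1 0) * (g 0 0 * (σ x * x) + g 1 1 * (σ y * y) - 2 * (σ x * y)))

structure WD (σ : A →ₐ[k] A) (φ : AddChar A ℂ) : Prop where
  inv : ∀ a, σ (σ a) = a
  tr : ∀ a, φ (σ a) = φ a
  nd : φ.IsPrimitive
  two : IsUnit (2 : A)
  nil : ∀ a : A, ∃ r : k, IsNilpotent (a - algebraMap k A r)

variable {σ : A →ₐ[k] A} {φ : AddChar A ℂ}

theorem WD.eqm (H : WD σ φ) {a b : A} (w : A) (h : a - b = w - σ w) : φ a = φ b := by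
  have : φ (w - σ w) = 1 := by
    rw [AddChar.map_sub_eq_div, H.tr, div_self]
    exact (AddChar.val_isUnit φ w).ne_zero
  rw [show a = b + (w - σ w) by rw [← h]; ring, AddChar.map_add_eq_mul, this, mul_one]

theorem WD.orth [DecidableEq A] (H : WD σ φ) (b : A) :
    ∑ y, φ (2 * b * y) = if b = 0 then (Fintype.card A : ℂ) else 0 := by
  have := AddChar.sum_mulShift (2 * b) H.nd
  simp only [mul_comm _ (2 * b)] at this
  rw [this]
  have h2 : 2 * b = 0 ↔ b = 0 := H.two.mul_right_eq_zero
  simp only [h2]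
  split_ifs <;> simp

theorem S_sub (a t : A) (ht : IsUnit t) : gS σ φ (a * (σ t * t)) = gS σ φ a := by
  unfold gS
  refine Fintype.sum_equiv (Units.mulLeft ht.unit) _ _ ?_
  intro u
  simp
  congr 1
  ring

theorem WD.S_mul_neg (H : WD σ φ) : gS σ φ 1 * gS σ φ (-1) = Fintype.card A := by
  classical
  unfold gS
  rw [Finset.sum_mul_sum, Finset.sum_comm]
  have : ∀ v : A, ∑ u, φ (1 * (σ u * u)) * φ (-1 * (σ v * v)) =
      ∑ s, φ (1 * (σ s * s)) * φ (2 * σ s * v) := by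
    intro v
    refine Fintype.sum_equiv (Equiv.subRight v) _ _ ?_
    intro u
    rw [← AddChar.map_add_eq_mul, ← AddChar.map_add_eq_mul]
    refine H.eqm (σ v * u) ?_
    simp only [Equiv.subRight_apply, map_sub, map_mul, H.inv]
    ring
  simp only [this]
  rw [Finset.sum_comm]
  simp only [← Finset.mul_sum, H.orth]
  have h0 : ∀ s : A, σ s = 0 ↔ s = 0 := fun s => by
    constructor
    · intro h; rw [← H.inv s, h, map_zero]
    · rintro rfl; simp
  simp [h0]

theorem WD.S1 (H : WD σ φ) [Nonempty A] : gS σ φ 1 ≠ 0 := by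
  intro h
  have := H.S_mul_neg
  rw [h, zero_mul] at this
  exact Fintype.card_ne_zero (α := A) (by exact_mod_cast this.symm)

/-- The composition rule on the big cell. -/
theorem WD.comp (H : WD σ φ) (hS : ∀ a b, IsUnit a → IsUnit b → gS σ φ (a * b) * gS σ φ 1 = gS σ φ a * gS σ φ b)
    (g g' : Matrix (Fin 2) (Fin 2) A) (hg : g ∈ SLstarSet (⇑σ)) (hg' : g' ∈ SLstarSet (⇑σ))
    (u1 : IsUnit (g 1 0)) (u2 : IsUnit (g' 1 0)) (u : IsUnit ((g * g') 1 0)) :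
    wker σ φ (g * g') = wker σ φ g * wker σ φ g' := by
  obtain ⟨p1, p2, p3, p4, p5, p6⟩ := hg
  obtain ⟨q1, q2, q3, q4, q5, q6⟩ := hg'
  ext x z
  rw [Matrix.mul_apply]
  simp only [wker]
  have hc : (g * g') 1 0 = g 1 0 * g' 0 0 + g 1 1 * g' 1 0 := by
    simp [Matrix.mul_apply, Fin.sum_univ_two]
  have ha : (g * g') 0 0 = g 0 0 * g' 0 0 + g 0 1 * g' 1 0 := by
    simp [Matrix.mul_apply, Fin.sum_univ_two]
  have hd : (g * g') 1 1 = g 1 0 * g' 0 1 + g 1 1 * g' 1 1 := by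
    simp [Matrix.mul_apply, Fin.sum_univ_two]
  have r1 := Ring.mul_inverse_cancel _ u1
  have r2 := Ring.mul_inverse_cancel _ u2
  have r := Ring.mul_inverse_cancel _ u
  generalize Ring.inverse (g 1 0) = i1 at *
  generalize Ring.inverse (g' 1 0) = i2 at *
  generalize Ring.inverse ((g * g') 1 0) = i at *
  generalize (g * g') 1 0 = c at *
  generalize (g * g') 0 0 = a at *
  generalize (g * g') 1 1 = d at *
  generalize g 0 0 = a1 at *
  generalize g 0 1 = b1 at *
  generalize g 1 0 = c1 at *
  generalize g 1 1 = d1 at *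
  generalize g' 0 0 = a2 at *
  generalize g' 0 1 = b2 at *
  generalize g' 1 0 = c2 at *
  generalize g' 1 1 = d2 at *
  have s1 : σ c1 * σ i1 = 1 := by rw [← map_mul, r1, map_one]
  have s2 : σ c2 * σ i2 = 1 := by rw [← map_mul, r2, map_one]
  have t1 : i1 * d1 = σ i1 * σ d1 := by
    linear_combination (-i1 * σ i1) * p2 + σ i1 * σ d1 * r1 - i1 * d1 * s1
  have t2 : i2 * a2 = σ i2 * σ a2 := by
    linear_combination (-i2 * σ i2) * q3 - i2 * a2 * s2 + σ i2 * σ a2 * r2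
  obtain ⟨e, he⟩ : ∃ e, e = i1 * d1 + i2 * a2 := ⟨_, rfl⟩
  have ec : e = c * i1 * i2 := by
    rw [he, hc]; linear_combination (-i2 * a2) * r1 - i1 * d1 * r2
  have es : σ e = e := by
    rw [he, map_add, map_mul, map_mul, ← t1, ← t2]
  obtain ⟨E, hE⟩ : ∃ E, E = i * c1 * c2 := ⟨_, rfl⟩
  have eE : e * E = 1 := by
    rw [ec, hE]; linear_combination (c1 * i1 * c2 * i2) * r + (c2 * i2) * r1 + r2
  have Es : σ E = E := by
    have h : e * σ E = 1 := by rw [← es, ← map_mul, eE, map_one]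
    linear_combination (-σ E) * eE + E * h
  have f4 : i * a = i1 * a1 - E * i1 * σ i1 := by
    have k1 : i1 * d1 * a1 = b1 + σ i1 := by
      rw [t1]; linear_combination σ i1 * p5 + b1 * s1
    have k2 : a = c * i1 * a1 - c2 * σ i1 := by
      rw [ha, hc]; linear_combination (-c2) * k1 - a1 * a2 * r1
    rw [k2, hE]; linear_combination (i1 * a1) * r + i * c2 * σ i1 * r1
  have f5 : i * d = i2 * d2 - E * i2 * σ i2 := by
    have k1 : i2 * a2 * d2 = b2 + σ i2 := by
      rw [t2]; linear_combination σ i2 * q6 + b2 * s2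
    have k2 : d = c * i2 * d2 - c1 * σ i2 := by
      rw [hd, hc]; linear_combination (-c1) * k1 - d1 * d2 * r2
    rw [k2, hE]; linear_combination (i2 * d2) * r + i * c1 * σ i2 * r2
  have f6 : E * i1 * i2 = i := by
    rw [hE]; linear_combination (i * c2 * i2) * r1 + i * r2
  have f6' : E * σ i1 * σ i2 = σ i := by
    rw [← f6, map_mul, map_mul, Es]
  have main : ∀ y, φ (i1 * (a1 * (σ x * x) + d1 * (σ y * y) - 2 * (σ x * y))) *
      φ (i2 * (a2 * (σ y * y) + d2 * (σ z * z) - 2 * (σ y * z))) =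
      φ (i * (a * (σ x * x) + d * (σ z * z) - 2 * (σ x * z))) *
      φ (e * (σ (y + -(E * (σ i1 * x + i2 * z))) * (y + -(E * (σ i1 * x + i2 * z))))) := by
    intro y
    rw [← AddChar.map_add_eq_mul, ← AddChar.map_add_eq_mul]
    refine H.eqm (-i1 * σ x * y - i2 * σ y * z + i * σ x * z) ?_
    simp only [map_add, map_neg, map_mul, map_sub, H.inv, Es]
    linear_combination (-σ y * y) * he - σ x * x * f4 - σ z * z * f5
      - (σ x * z) * f6 - x * σ z * f6'
      + (σ y * (σ i1 * x + i2 * z) + y * (i1 * σ x + σ i2 * σ z)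
        - E * (σ i1 * x + i2 * z) * (i1 * σ x + σ i2 * σ z)) * eE
  have hsum : ∑ y, φ (e * (σ (y + -(E * (σ i1 * x + i2 * z))) * (y + -(E * (σ i1 * x + i2 * z)))))
      = gS σ φ e := by
    unfold gS
    exact Fintype.sum_equiv (Equiv.addRight _) _ _ (fun y => rfl)
  have : ∀ y, gS σ φ c1 / gS σ φ 1 ^ 2 * φ (i1 * (a1 * (σ x * x) + d1 * (σ y * y) - 2 * (σ x * y))) *
      (gS σ φ c2 / gS σ φ 1 ^ 2 * φ (i2 * (a2 * (σ y * y) + d2 * (σ z * z) - 2 * (σ y * z)))) =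
      (gS σ φ c1 / gS σ φ 1 ^ 2 * (gS σ φ c2 / gS σ φ 1 ^ 2) *
        φ (i * (a * (σ x * x) + d * (σ z * z) - 2 * (σ x * z)))) *
      φ (e * (σ (y + -(E * (σ i1 * x + i2 * z))) * (y + -(E * (σ i1 * x + i2 * z))))) := by
    intro y
    linear_combination (gS σ φ c1 / gS σ φ 1 ^ 2 * (gS σ φ c2 / gS σ φ 1 ^ 2)) * main y
  simp only [this]
  rw [← Finset.mul_sum, hsum]
  have S1 := H.S1
  have ue : IsUnit e := IsUnit.of_mul_eq_one _ eE
  have m1 := hS c1 c2 u1 u2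
  have m2 := hS (c1 * c2) e (u1.mul u2) ue
  have m3 : c1 * c2 * e = c := by
    rw [ec]; linear_combination (c * c2 * i2) * r1 + c * r2
  rw [m3] at m2
  have m4 : gS σ φ c * gS σ φ 1 ^ 2 = gS σ φ c1 * gS σ φ c2 * gS σ φ e := by
    linear_combination (gS σ φ 1) * m2 + gS σ φ e * m1
  generalize φ (i * (a * (σ x * x) + d * (σ z * z) - 2 * (σ x * z))) = P
  field_simp
  linear_combination P * m4

theorem WD.comp_inv [DecidableEq A] (H : WD σ φ)
    (hS : ∀ a b, IsUnit a → IsUnit b → gS σ φ (a * b) * gS σ φ 1 = gS σ φ a * gS σ φ b)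
    (g : Matrix (Fin 2) (Fin 2) A) (hg : g ∈ SLstarSet (⇑σ)) (u1 : IsUnit (g 1 0)) :
    wker σ φ g * wker σ φ (sadj σ g) = 1 := by
  obtain ⟨p1, p2, p3, p4, p5, p6⟩ := hg
  ext x z
  rw [Matrix.mul_apply]
  have e10 : sadj σ g 1 0 = -σ (g 1 0) := by simp [sadj]
  have e00 : sadj σ g 0 0 = σ (g 1 1) := by simp [sadj]
  have e11 : sadj σ g 1 1 = σ (g 0 0) := by simp [sadj]
  have u2 : IsUnit (-σ (g 1 0)) := (u1.map σ).neg
  simp only [wker, e10, e00, e11]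
  have r1 := Ring.mul_inverse_cancel _ u1
  have r2 := Ring.mul_inverse_cancel _ u2
  generalize Ring.inverse (g 1 0) = i1 at *
  generalize Ring.inverse (-σ (g 1 0)) = i2 at *
  generalize g 0 0 = a1 at *
  generalize g 0 1 = b1 at *
  generalize g 1 0 = c1 at *
  generalize g 1 1 = d1 at *
  have s1 : σ c1 * σ i1 = 1 := by rw [← map_mul, r1, map_one]
  have hi2 : i2 = -σ i1 := by linear_combination (-σ i1) * r2 - i2 * s1
  subst hi2
  have t1 : i1 * d1 = σ i1 * σ d1 := by
    linear_combination (-i1 * σ i1) * p2 + σ i1 * σ d1 * r1 - i1 * d1 * s1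
  have t2 : i1 * a1 = σ i1 * σ a1 := by
    linear_combination (-i1 * σ i1) * p3 - i1 * a1 * s1 + σ i1 * σ a1 * r1
  have main : ∀ y, φ (i1 * (a1 * (σ x * x) + d1 * (σ y * y) - 2 * (σ x * y))) *
      φ (-σ i1 * (σ d1 * (σ y * y) + σ a1 * (σ z * z) - 2 * (σ y * z))) =
      φ (i1 * a1 * (σ x * x - σ z * z)) * φ (2 * (i1 * (σ z - σ x)) * y) := by
    intro y
    rw [← AddChar.map_add_eq_mul, ← AddChar.map_add_eq_mul]
    refine H.eqm (2 * σ i1 * σ y * z) ?_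
    simp only [map_mul, H.inv, map_ofNat]
    linear_combination (σ y * y) * t1 + (σ z * z) * t2
  have S1 := H.S1
  have : ∀ y, gS σ φ c1 / gS σ φ 1 ^ 2 * φ (i1 * (a1 * (σ x * x) + d1 * (σ y * y) - 2 * (σ x * y))) *
      (gS σ φ (-σ c1) / gS σ φ 1 ^ 2 * φ (-σ i1 * (σ d1 * (σ y * y) + σ a1 * (σ z * z) - 2 * (σ y * z)))) =
      (gS σ φ c1 / gS σ φ 1 ^ 2 * (gS σ φ (-σ c1) / gS σ φ 1 ^ 2) *
        φ (i1 * a1 * (σ x * x - σ z * z))) * φ (2 * (i1 * (σ z - σ x)) * y) := by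
    intro y
    linear_combination (gS σ φ c1 / gS σ φ 1 ^ 2 * (gS σ φ (-σ c1) / gS σ φ 1 ^ 2)) * main y
  simp only [this]
  rw [← Finset.mul_sum, H.orth]
  have hz : i1 * (σ z - σ x) = 0 ↔ x = z := by
    constructor
    · intro h
      have h1 : σ x = σ z := by linear_combination (-c1) * h + (σ z - σ x) * r1
      rw [← H.inv x, h1, H.inv]
    · rintro rfl; ring
  have m1 := hS c1 (-σ c1) u1 u2
  rw [show c1 * -σ c1 = -1 * (σ c1 * c1) by ring, S_sub _ _ u1] at m1
  have m2 := H.S_mul_neg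
  simp only [hz, Matrix.one_apply]
  split_ifs with h
  · subst h
    rw [sub_self, mul_zero, AddChar.map_zero_eq_one, mul_one, ← m2]
    field_simp
    have m3 := hS (-1) (-1) isUnit_one.neg isUnit_one.neg
    rw [neg_mul_neg, one_mul] at m3
    linear_combination (-gS σ φ (-1)) * m1 - gS σ φ 1 * m3
  · simp

theorem WD.big (H : WD σ φ) [Nontrivial A] (a : A) : IsUnit a ∨ IsNilpotent a := by
  obtain ⟨r, hr⟩ := H.nil a
  by_cases h : r = 0
  · right; simpa [h] using hr
  · left
    have := hr.isUnit_add_left_of_commute ((Ne.isUnit h).map (algebraMap k A)) (Commute.all _ _)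
    simpa using this

theorem WD.loc (H : WD σ φ) [Nontrivial A] : IsLocalRing A := by
  refine IsLocalRing.of_isUnit_or_isUnit_one_sub_self ?_
  intro a
  rcases H.big a with h | h
  · exact Or.inl h
  · right; exact h.isUnit_one_sub

theorem S_sq (a r s : k) (hrs : a = r ^ 2 + s ^ 2) (ha : a ≠ 0) :
    gS σ φ (algebraMap k A a) ^ 2 = gS σ φ 1 ^ 2 := by
  have h1 : ∀ c : A, gS σ φ c ^ 2 = ∑ p : A × A, φ (c * (σ p.1 * p.1 + σ p.2 * p.2)) := by
    intro c
    rw [pow_two, gS, Finset.sum_mul_sum, Fintype.sum_prod_type]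
    simp only [mul_add, AddChar.map_add_eq_mul]
  rw [h1, h1]
  have hA : algebraMap k A r * algebraMap k A r + algebraMap k A s * algebraMap k A s
      = algebraMap k A a := by
    rw [hrs]; simp [pow_two]
  have hI : algebraMap k A a * algebraMap k A a⁻¹ = 1 := by
    rw [← map_mul, mul_inv_cancel₀ ha, map_one]
  have hr : σ (algebraMap k A r) = algebraMap k A r := σ.commutes r
  have hs : σ (algebraMap k A s) = algebraMap k A s := σ.commutes s
  generalize algebraMap k A a = a' at *
  generalize algebraMap k A r = r' at *
  generalize algebraMap k A s = s' at *
  generalize algebraMap k A a⁻¹ = i at *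
  refine Fintype.sum_equiv
    ⟨fun p => (r' * p.1 - s' * p.2, s' * p.1 + r' * p.2),
     fun p => (i * (r' * p.1 + s' * p.2), i * (r' * p.2 - s' * p.1)), ?_, ?_⟩ _ _ ?_
  · rintro ⟨u, v⟩
    ext
    · simp only; linear_combination (i * u) * hA + u * hI
    · simp only; linear_combination (i * v) * hA + v * hI
  · rintro ⟨u, v⟩
    ext
    · simp only; linear_combination (i * u) * hA + u * hI
    · simp only; linear_combination (i * v) * hA + v * hI
  · rintro ⟨u, v⟩
    simp only [Equiv.coe_fn_mk, map_sub, map_mul, map_add, hr, hs]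
    congr 1
    rw [← hA]; ring

theorem WD.S_const (H : WD σ φ) [Fintype k] (hodd : Odd (Fintype.card k)) [Nontrivial A] (a : A) (r : k)
    (hr0 : r ≠ 0) (hr : IsNilpotent (a - algebraMap k A r)) :
    gS σ φ a = gS σ φ (algebraMap k A r) := by
  obtain ⟨t, ht⟩ := H.two.exists_right_inv
  have hts : σ t = t := by
    have h : 2 * σ t = 1 := by
      have := congrArg σ ht
      rwa [map_mul, map_one, map_ofNat] at this
    linear_combination (-σ t) * ht + t * h
  have h1 : gS σ φ a = gS σ φ (t * (a + σ a)) := by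
    unfold gS
    refine Finset.sum_congr rfl fun u _ => H.eqm (t * a * (σ u * u)) ?_
    simp only [map_mul, H.inv, hts]
    linear_combination (-a * σ u * u) * ht
  have hn : IsNilpotent (t * (a + σ a) - algebraMap k A r) := by
    have h2 := hr.map σ
    rw [map_sub, σ.commutes] at h2
    have h3 := (Commute.all _ _).isNilpotent_add hr h2
    have h4 := (Commute.all t _).isNilpotent_mul_left h3
    convert h4 using 1
    linear_combination (algebraMap k A r) * ht
  have hes : σ (t * (a + σ a)) = t * (a + σ a) := by
    simp only [map_mul, map_add, hts, H.inv]; ring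
  rw [h1]
  generalize t * (a + σ a) = e at *
  have ue : IsUnit e := by
    have := hn.isUnit_add_left_of_commute ((Ne.isUnit hr0).map (algebraMap k A)) (Commute.all _ _)
    simpa using this
  obtain ⟨N, hN⟩ := hn
  obtain ⟨p, hp⟩ := CharP.exists k
  obtain ⟨d, pp, hd⟩ := FiniteField.card k p
  have : Fact p.Prime := ⟨pp⟩
  have : CharP A p := charP_of_injective_algebraMap (algebraMap k A).injective p
  have hpow : e ^ (Fintype.card k ^ N) = algebraMap k A r := by
    have h2 : e = algebraMap k A r + (e - algebraMap k A r) := by ring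
    have h3 : (e - algebraMap k A r) ^ (Fintype.card k ^ N) = 0 :=
      pow_eq_zero_of_le (Nat.lt_pow_self (Fintype.one_lt_card)).le hN
    have h4 : Fintype.card k ^ N = p ^ (d * N) := by rw [hd, pow_mul]
    rw [h2, h4, add_pow_char_pow, ← h4, h3, add_zero, ← map_pow, FiniteField.pow_card_pow]
  obtain ⟨j, hj⟩ := hodd.pow (n := N)
  rw [← hpow, hj, ← S_sub e (e ^ j) (ue.pow j), map_pow, hes]
  congr 1
  ring

theorem WD.S_mul (H : WD σ φ) [Fintype k] (hodd : Odd (Fintype.card k)) [Nontrivial A] (a b : A)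
    (ha : IsUnit a) (hb : IsUnit b) : gS σ φ (a * b) * gS σ φ 1 = gS σ φ a * gS σ φ b := by
  classical
  obtain ⟨r, hr⟩ := H.nil a
  obtain ⟨s, hs⟩ := H.nil b
  have hr0 : r ≠ 0 := by
    rintro rfl
    rw [map_zero, sub_zero] at hr
    exact hr.not_isUnit ha
  have hs0 : s ≠ 0 := by
    rintro rfl
    rw [map_zero, sub_zero] at hs
    exact hs.not_isUnit hb
  have hrs : IsNilpotent (a * b - algebraMap k A (r * s)) := by
    have := (Commute.all _ _).isNilpotent_add ((Commute.all b _).isNilpotent_mul_left hr)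
      ((Commute.all (algebraMap k A r) _).isNilpotent_mul_left hs)
    convert this using 1
    rw [map_mul]; ring
  rw [H.S_const hodd a r hr0 hr, H.S_const hodd b s hs0 hs,
    H.S_const hodd _ _ (mul_ne_zero hr0 hs0) hrs]
  clear hr hs hrs
  have sqr : ∀ x y : k, y ≠ 0 → gS σ φ (algebraMap k A (x * (y * y))) = gS σ φ (algebraMap k A x) := by
    intro x y hy
    rw [← S_sub (algebraMap k A x) (algebraMap k A y) ((Ne.isUnit hy).map _), σ.commutes, map_mul, map_mul]
  have hchar : ringChar k ≠ 2 := by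
    intro h
    have := FiniteField.even_card_iff_char_two.mp h
    rw [Nat.odd_iff] at hodd
    omega
  by_cases h1 : IsSquare r
  · obtain ⟨y, rfl⟩ := h1
    have hy : y ≠ 0 := by rintro rfl; simp at hr0
    have := sqr 1 y hy
    rw [one_mul, map_one] at this
    rw [this, mul_comm (y * y), sqr _ _ hy]; ring
  by_cases h2 : IsSquare s
  · obtain ⟨y, rfl⟩ := h2
    have hy : y ≠ 0 := by rintro rfl; simp at hs0
    have := sqr 1 y hy
    rw [one_mul, map_one] at this
    rw [this, sqr _ _ hy]
  have h3 : IsSquare (r * s) := by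
    rw [← quadraticChar_one_iff_isSquare (mul_ne_zero hr0 hs0), map_mul,
      quadraticChar_neg_one_iff_not_isSquare.mpr h1, quadraticChar_neg_one_iff_not_isSquare.mpr h2]
    norm_num
  obtain ⟨y, hy⟩ := h3
  have hy0 : y ≠ 0 := by rintro rfl; rw [mul_zero] at hy; exact mul_ne_zero hr0 hs0 hy
  have e1 := sqr 1 y hy0
  rw [one_mul, map_one] at e1
  have e2 : gS σ φ (algebraMap k A s) = gS σ φ (algebraMap k A r) := by
    rw [← sqr r (y / r) (div_ne_zero hy0 hr0)]
    congr 2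
    field_simp
    rw [pow_two, ← hy, mul_comm]
  obtain ⟨u, v, huv⟩ : ∃ u v : k, r = u ^ 2 + v ^ 2 := by
    obtain ⟨u, v, h⟩ := FiniteField.exists_root_sum_quadratic (R := k) (f := X ^ 2) (g := X ^ 2 - C r)
      (by simp) (degree_X_pow_sub_C (by norm_num) _) (Nat.odd_iff.mp hodd)
    refine ⟨u, v, ?_⟩
    simp at h
    linear_combination -h
  have e3 := S_sq (σ := σ) (φ := φ) r u v huv hr0
  rw [hy, e1, e2]
  linear_combination -e3

theorem gen3 {G : Type*} (c : G → A) (d : G → A) [IsLocalRing A] (h2 : IsUnit (2 : A))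
    (hu : ∀ g, IsUnit (c g) ∨ IsUnit (d g)) (g1 g2 g3 : G) :
    (IsUnit (c g1) ∧ IsUnit (c g2) ∧ IsUnit (c g3)) ∨
    (IsUnit (d g1) ∧ IsUnit (d g2) ∧ IsUnit (d g3)) ∨
    (IsUnit (c g1 + d g1) ∧ IsUnit (c g2 + d g2) ∧ IsUnit (c g3 + d g3)) ∨
    (IsUnit (-c g1 + d g1) ∧ IsUnit (-c g2 + d g2) ∧ IsUnit (-c g3 + d g3)) := by
  have h2' : (2 : IsLocalRing.ResidueField A) ≠ 0 := by
    have := (h2.map (IsLocalRing.residue A)).ne_zero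
    rwa [map_ofNat] at this
  have e : ∀ a : A, IsUnit a ↔ IsLocalRing.residue A a ≠ 0 := fun a => by
    rw [IsLocalRing.residue_ne_zero_iff_isUnit]
  simp only [e, map_add, map_neg] at *
  have k1 := hu g1
  have k2 := hu g2
  have k3 := hu g3
  grind

theorem hM_mem (σ : A →ₐ[k] A) (hs : ∀ a, σ (σ a) = a) (t : Aˣ) :
    hM (σ : A →* A) t ∈ SLstarSet (⇑σ) := by
  have h1 : σ (t : A) * (((Units.map (σ : A →* A) t)⁻¹ : Aˣ) : A) = 1 := by
    exact Units.mul_inv (Units.map (σ : A →* A) t)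
  have h2 := congrArg σ h1
  simp only [map_mul, hs, map_one] at h2
  simp only [SLstarSet, hM, Set.mem_ofPred_eq, Matrix.of_apply, Matrix.cons_val', Matrix.cons_val_zero,
    Matrix.cons_val_one, Matrix.cons_val_fin_one, map_zero, h1, h2]
  simp

theorem uM_mem (σ : A →ₐ[k] A) (b : A) (hb : σ b = b) : uM b ∈ SLstarSet (⇑σ) := by
  simp [SLstarSet, uM, hb]

theorem wM_mem (σ : A →ₐ[k] A) : wM A ∈ SLstarSet (⇑σ) := by
  simp [SLstarSet, wM]

theorem WD.main [Fintype k] (H : WD σ φ) (hodd : Odd (Fintype.card k)) [Nontrivial A] :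
    ∃ (hmul : ∀ g ∈ SLstarSet (⇑σ), ∀ g' ∈ SLstarSet (⇑σ), g * g' ∈ SLstarSet (⇑σ))
      (hh : ∀ t : Aˣ, hM (σ : A →* A) t ∈ SLstarSet (⇑σ))
      (hu : ∀ b : A, σ b = b → uM b ∈ SLstarSet (⇑σ))
      (hw : wM A ∈ SLstarSet (⇑σ)),
      ∃ ρ : ↥(SLstarSet (⇑σ)) → ((A → ℂ) ≃ₗ[ℂ] (A → ℂ)),
        (∀ g g' : ↥(SLstarSet (⇑σ)),
          ρ ⟨(g : Matrix (Fin 2) (Fin 2) A) * (g' : Matrix (Fin 2) (Fin 2) A),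
             hmul g g.2 g' g'.2⟩ = ρ g * ρ g') ∧
        (∀ (t : Aˣ) (f : A → ℂ) (a : A),
          ρ ⟨hM (σ : A →* A) t, hh t⟩ f a
            = (gS σ φ (t : A) / gS σ φ 1) * f (a * t)) ∧
        (∀ (b : A) (hb : σ b = b) (f : A → ℂ) (a : A),
          ρ ⟨uM b, hu b hb⟩ f a = φ (b * (σ a * a)) * f a) ∧
        (∀ (f : A → ℂ) (a : A),
          ρ ⟨wM A, hw⟩ f a
            = ((gS σ φ (-1) / gS σ φ 1) / gS σ φ 1) *
                ∑ c : A, φ (σ a * c + a * σ c) * f c) := by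
  classical
  have hS := H.S_mul hodd
  have S1 := H.S1
  have hloc := H.loc
  letI := slGroup σ H.inv
  have cmul : ∀ g g' : ↥(SLstarSet (⇑σ)), (g * g').1 = g.1 * g'.1 := fun g g' => rfl
  have cinv : ∀ g : ↥(SLstarSet (⇑σ)), (g⁻¹).1 = sadj σ g.1 := fun g => rfl
  have cone : (1 : ↥(SLstarSet (⇑σ))).1 = 1 := rfl
  have c10 : ∀ g g' : ↥(SLstarSet (⇑σ)), (g * g').1 1 0 = g.1 1 0 * g'.1 0 0 + g.1 1 1 * g'.1 1 0 := by
    intro g g'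
    rw [cmul, Matrix.mul_apply, Fin.sum_univ_two]
  have hcd : ∀ g : ↥(SLstarSet (⇑σ)), IsUnit (g.1 1 0) ∨ IsUnit (g.1 1 1) := by
    rintro ⟨g, p1, p2, p3, p4, p5, p6⟩
    have h := isUnit_one (M := A)
    rw [← p6, sub_eq_add_neg] at h
    rcases IsLocalRing.isUnit_or_isUnit_of_isUnit_add h with h | h
    · exact Or.inr (isUnit_of_mul_isUnit_right h)
    · left
      have h3 := (isUnit_of_mul_isUnit_left (IsUnit.neg_iff _ |>.mp h)).map σ
      rwa [H.inv] at h3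
  let W : ↥(SLstarSet (⇑σ)) := ⟨wM A, wM_mem σ⟩
  let U : ∀ b : A, σ b = b → ↥(SLstarSet (⇑σ)) := fun b hb => ⟨uM b, uM_mem σ b hb⟩
  have W00 : W.1 0 0 = 0 := by simp [W, wM]
  have W10 : W.1 1 0 = -1 := by simp [W, wM]
  have W11 : W.1 1 1 = 0 := by simp [W, wM]
  have hWO : IsUnit (W.1 1 0) := by rw [W10]; exact isUnit_one.neg
  have gW : ∀ g : ↥(SLstarSet (⇑σ)), (g * W).1 1 0 = -g.1 1 1 := by
    intro g; rw [c10, W00, W10]; ring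
  obtain ⟨ρ, hρ1, hρ2⟩ := germ_ext (G := ↥(SLstarSet (⇑σ))) (M := Matrix A A ℂ)
    (fun g => IsUnit (g.1 1 0)) (fun g => wker σ φ g.1)
    (fun g h a b c => H.comp hS g.1 h.1 g.2 h.2 a b c)
    (fun g a => H.comp_inv hS g.1 g.2 a)
    (fun g a => by
      show IsUnit ((g⁻¹).1 1 0)
      have e10 : sadj σ g.1 1 0 = -σ (g.1 1 0) := by simp [sadj]
      rw [cinv, e10]
      exact (a.map σ).neg)
    (fun b x hb hx => by
      show IsUnit ((b * x).1 1 0)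
      have hd := (hcd b).resolve_left hb
      rw [c10]
      by_contra hcon
      have h1 : b.1 1 0 * x.1 0 0 ∈ nonunits A := fun h => hb (isUnit_of_mul_isUnit_left h)
      have h2 := IsLocalRing.nonunits_add (a := b.1 1 0 * x.1 0 0 + b.1 1 1 * x.1 1 0)
        (b := -(b.1 1 0 * x.1 0 0)) hcon (fun h => h1 ((IsUnit.neg_iff _).mp h))
      rw [add_comm, neg_add_cancel_left] at h2
      exact h2 (hd.mul hx))
    (fun a b c => by
      show ∃ h, IsUnit ((a * h).1 1 0) ∧ IsUnit ((b * h).1 1 0) ∧ IsUnit ((c * h).1 1 0)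
      have hm1 : σ (-1) = -1 := by simp
      have eu : ∀ (s : A) (hs : σ s = s) (g : ↥(SLstarSet (⇑σ))),
          (g * (U s hs * W)).1 1 0 = -(s * g.1 1 0 + g.1 1 1) := by
        intro s hs g
        rw [← mul_assoc, gW, cmul, Matrix.mul_apply, Fin.sum_univ_two]
        simp [U, uM]; ring
      rcases gen3 (fun g : ↥(SLstarSet (⇑σ)) => g.1 1 0) (fun g => g.1 1 1) H.two hcd a b c
        with h | h | h | h
      · refine ⟨1, ?_⟩
        simpa only [mul_one] using h
      · refine ⟨W, ?_⟩
        simpa only [gW, IsUnit.neg_iff] using h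
      · refine ⟨U 1 (map_one σ) * W, ?_⟩
        simpa only [eu, IsUnit.neg_iff, one_mul] using h
      · refine ⟨U (-1) hm1 * W, ?_⟩
        simpa only [eu, IsUnit.neg_iff, neg_mul, one_mul] using h)
  have hD : ∀ (g : ↥(SLstarSet (⇑σ))) (D : Matrix A A ℂ), IsUnit (g.1 1 1) →
      D * wker σ φ W.1 = wker σ φ (g * W).1 → ρ g = D := by
    intro g D hg h
    have h1 := hρ2 g W hWO (by simpa only [gW, IsUnit.neg_iff] using hg)
    have h2 := H.comp_inv hS W.1 W.2 hWO
    rw [h1]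
    show wker σ φ (g * W).1 * wker σ φ (sadj σ W.1) = D
    rw [← h, mul_assoc, h2, mul_one]
  have rinv : Ring.inverse (-1 : A) = -1 := by
    have := Ring.mul_inverse_cancel (-1 : A) isUnit_one.neg
    linear_combination -this
  let F : ↥(SLstarSet (⇑σ)) →* ((A → ℂ) ≃ₗ[ℂ] (A → ℂ)) :=
    (LinearMap.GeneralLinearGroup.generalLinearEquiv ℂ (A → ℂ)).toMonoidHom.comp
      (MonoidHom.toHomUnits
        (((Matrix.toLinAlgEquiv' (R := ℂ) (n := A)) : Matrix A A ℂ →* _).comp ρ))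
  have hF : ∀ g f a, F g f a = ∑ c, ρ g a c * f c := by
    intro g f a
    have : F g f = (ρ g).mulVec f := rfl
    rw [this]; rfl
  refine ⟨fun g hg g' hg' => sl_closed σ g hg g' hg' H.inv, hM_mem σ H.inv, uM_mem σ, wM_mem σ,
    F, ?_, ?_, ?_, ?_⟩
  · intro g g'
    exact map_mul F g g'
  · intro t f a
    have hti : σ (t : A) * (((Units.map (σ : A →* A) t)⁻¹ : Aˣ) : A) = 1 :=
      Units.mul_inv (Units.map (σ : A →* A) t)
    rw [hF, hD ⟨hM (σ : A →* A) t, hM_mem σ H.inv t⟩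
      (Matrix.of fun x y => if y = x * t then gS σ φ t / gS σ φ 1 else 0)]
    · simp
    · show IsUnit (((Units.map (σ : A →* A) t)⁻¹ : Aˣ) : A)
      exact Units.isUnit _
    · ext x y
      rw [Matrix.mul_apply]
      have e10 : (hM (σ : A →* A) t * wM A) 1 0 = -(((Units.map (σ : A →* A) t)⁻¹ : Aˣ) : A) := by
        simp [hM, wM]
      have e00 : (hM (σ : A →* A) t * wM A) 0 0 = 0 := by simp [hM, wM]
      have e11 : (hM (σ : A →* A) t * wM A) 1 1 = 0 := by simp [hM, wM]
      simp only [Matrix.of_apply, wker, W00, W10, W11, rinv, cmul]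
      rw [show (W.1 : Matrix (Fin 2) (Fin 2) A) = wM A from rfl, e10, e00, e11]
      generalize (((Units.map (σ : A →* A) t)⁻¹ : Aˣ) : A) = i at *
      have hui : IsUnit i := IsUnit.of_mul_eq_one_right _ hti
      have ri : Ring.inverse (-i) = -σ t := by
        have := Ring.mul_inverse_cancel (-i) hui.neg
        linear_combination (-σ (t : A)) * this - Ring.inverse (-i) * hti
      have m1 := hS t (-1) t.isUnit isUnit_one.neg
      have m2 : gS σ φ (-i) = gS σ φ (t * -1) := by
        rw [← S_sub (-i) t t.isUnit]
        congr 1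
        linear_combination (-(t : A)) * hti
      rw [← m2] at m1
      rw [ri]
      simp only [ite_mul, zero_mul, Finset.sum_ite_eq', Finset.sum_ite_eq, Finset.mem_univ, if_true, map_mul]
      rw [show -1 * (0 + 0 - 2 * (σ x * σ (t : A) * y)) = -σ (t : A) * (0 + 0 - 2 * (σ x * y)) by ring]
      generalize φ (-σ (t : A) * (0 + 0 - 2 * (σ x * y))) = P
      field_simp
      linear_combination -P * m1
  · intro b hb f a
    rw [hF, hD (U b hb) (Matrix.of fun x y => if y = x then φ (b * (σ x * x)) else 0)]
    · simp
    · simp [U, uM]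
    · ext x y
      rw [Matrix.mul_apply]
      have e10 : (U b hb * W).1 1 0 = -1 := by rw [cmul]; simp [U, W, uM, wM]
      have e00 : (U b hb * W).1 0 0 = -b := by rw [cmul]; simp [U, W, uM, wM]
      have e11 : (U b hb * W).1 1 1 = 0 := by rw [cmul]; simp [U, W, uM, wM]
      simp only [Matrix.of_apply, wker, W00, W10, W11, rinv, e10, e00, e11]
      simp only [ite_mul, zero_mul, Finset.sum_ite_eq', Finset.sum_ite_eq, Finset.mem_univ, if_true]
      rw [show -1 * (-b * (σ x * x) + 0 - 2 * (σ x * y)) =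
        b * (σ x * x) + -1 * (0 + 0 - 2 * (σ x * y)) by ring, AddChar.map_add_eq_mul]
      ring
  · intro f a
    have h1 : ρ W = wker σ φ W.1 := hρ1 W hWO
    rw [show (⟨wM A, wM_mem σ⟩ : ↥(SLstarSet (⇑σ))) = W from rfl, hF, h1, Finset.mul_sum]
    refine Finset.sum_congr rfl fun c _ => ?_
    simp only [Matrix.of_apply, wker, W00, W10, W11, rinv]
    have : φ (-1 * (0 * (σ a * a) + 0 * (σ c * c) - 2 * (σ a * c))) = φ (σ a * c + a * σ c) := by
      refine H.eqm (σ a * c) ?_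
      simp only [map_mul, H.inv]
      ring
    rw [this]
    field_simp

end Gen

section Trunc

variable {k : Type*} [Field k] {m : ℕ}

theorem tp_tr (tr : TruncPoly k m →ₗ[k] k) (hm : 0 < m)
    (htr : ∀ i < m, tr (Ideal.Quotient.mk _ ((Polynomial.X : Polynomial k) ^ i))
      = if i = m - 1 then 1 else 0) (p : Polynomial k) :
    tr (Ideal.Quotient.mk _ p) = p.coeff (m - 1) := by
  have hX : ∀ i, tr (Ideal.Quotient.mk _ ((Polynomial.X : Polynomial k) ^ i))
      = if i = m - 1 then 1 else 0 := by
    intro i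
    by_cases h : i < m
    · exact htr i h
    · have h0 : (Ideal.Quotient.mk (Ideal.span {(Polynomial.X : Polynomial k) ^ m}))
          ((Polynomial.X : Polynomial k) ^ i) = 0 :=
        Ideal.Quotient.eq_zero_iff_mem.mpr
          (Ideal.mem_span_singleton.mpr (pow_dvd_pow _ (by omega)))
      rw [h0, map_zero, if_neg (by omega)]
  induction p using Polynomial.induction_on' with
  | add p q hp hq => rw [map_add, map_add, hp, hq, coeff_add]
  | monomial n a =>
    have : Ideal.Quotient.mk (Ideal.span {(Polynomial.X : Polynomial k) ^ m}) (monomial n a) =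
        a • Ideal.Quotient.mk (Ideal.span {(Polynomial.X : Polynomial k) ^ m}) (X ^ n) := by
      rw [← C_mul_X_pow_eq_monomial, ← smul_eq_C_mul]
      rfl
    rw [this, map_smul, hX, coeff_monomial]
    simp

theorem tp_sig (σ : TruncPoly k m →ₐ[k] TruncPoly k m) (hσ : σ (xbar k m) = -xbar k m)
    (p : Polynomial k) : σ (Ideal.Quotient.mk _ p) = Ideal.Quotient.mk _ (p.comp (-X)) := by
  induction p using Polynomial.induction_on' with
  | add p q hp hq => rw [map_add, map_add, hp, hq, add_comp, map_add]
  | monomial n a =>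
    have h1 : Ideal.Quotient.mk (Ideal.span {(Polynomial.X : Polynomial k) ^ m}) (C a) =
      algebraMap k _ a := rfl
    have h2 : Ideal.Quotient.mk (Ideal.span {(Polynomial.X : Polynomial k) ^ m}) X = xbar k m := rfl
    rw [← C_mul_X_pow_eq_monomial, map_mul, map_mul, map_pow, map_pow, h1, h2, σ.commutes, hσ,
      mul_comp, C_comp, pow_comp, X_comp, map_mul, map_pow, map_neg, h1, h2]

theorem tp_inv (σ : TruncPoly k m →ₐ[k] TruncPoly k m) (hσ : σ (xbar k m) = -xbar k m)
    (a : TruncPoly k m) : σ (σ a) = a := by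
  obtain ⟨p, rfl⟩ := Ideal.Quotient.mk_surjective a
  rw [tp_sig σ hσ, tp_sig σ hσ, comp_assoc]
  simp

theorem tp_tr_sig (hm : 0 < m) (hmodd : Odd m)
    (σ : TruncPoly k m →ₐ[k] TruncPoly k m) (hσ : σ (xbar k m) = -xbar k m)
    (tr : TruncPoly k m →ₗ[k] k)
    (htr : ∀ i < m, tr (Ideal.Quotient.mk _ ((Polynomial.X : Polynomial k) ^ i))
      = if i = m - 1 then 1 else 0) (a : TruncPoly k m) : tr (σ a) = tr a := by
  obtain ⟨p, rfl⟩ := Ideal.Quotient.mk_surjective a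
  rw [tp_sig σ hσ, tp_tr tr hm htr, tp_tr tr hm htr, neg_eq_neg_one_mul,
    ← C_1, ← C_neg, comp_C_mul_X_coeff]
  have : Even (m - 1) := Nat.Odd.sub_odd hmodd odd_one
  rw [this.neg_one_pow, mul_one]

theorem tp_nil (a : TruncPoly k m) :
    ∃ r : k, IsNilpotent (a - algebraMap k (TruncPoly k m) r) := by
  obtain ⟨p, rfl⟩ := Ideal.Quotient.mk_surjective a
  refine ⟨p.coeff 0, m, ?_⟩
  have h1 : algebraMap k (TruncPoly k m) (p.coeff 0) = Ideal.Quotient.mk _ (C (p.coeff 0)) := rfl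
  rw [h1, ← map_sub, ← map_pow]
  refine Ideal.Quotient.eq_zero_iff_mem.mpr (Ideal.mem_span_singleton.mpr (pow_dvd_pow_of_dvd ?_ _))
  rw [X_dvd_iff]
  simp

theorem tp_nd (hm : 0 < m) (tr : TruncPoly k m →ₗ[k] k)
    (htr : ∀ i < m, tr (Ideal.Quotient.mk _ ((Polynomial.X : Polynomial k) ^ i))
      = if i = m - 1 then 1 else 0) (ψ : AddChar k ℂ) (hψ : ∃ x : k, ψ x ≠ 1)
    (a : TruncPoly k m) (h : ∀ c, ψ (tr (a * c)) = 1) : a = 0 := by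
  obtain ⟨p, rfl⟩ := Ideal.Quotient.mk_surjective a
  refine Ideal.Quotient.eq_zero_iff_mem.mpr (Ideal.mem_span_singleton.mpr ?_)
  rw [X_pow_dvd_iff]
  intro j hj
  by_contra hne
  obtain ⟨x, hx⟩ := hψ
  apply hx
  have := h (Ideal.Quotient.mk _ (C (x / p.coeff j) * X ^ (m - 1 - j)))
  rw [← map_mul, tp_tr tr hm htr, ← mul_assoc, coeff_mul_X_pow', if_pos (by omega), coeff_mul_C,
    show m - 1 - (m - 1 - j) = j by omega, mul_div_cancel₀ _ hne] at this
  exact this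

end Trunc

/-- For `m` odd, the generalized Weil representation of
`SL_*(2,A_m)`: a homomorphism `ρ` into `GL(W)`, `W` the space of complex functions
on `A_m`, acting on the Bruhat generators by
`(ρ(h(t))f)(a) = α(t) f(at)`, `(ρ(u(b))f)(a) = ψ̲(b Q(a)) f(a)`, and
`(ρ(w)f)(a) = (α(−1)/S(1)) Σ_c ψ̲(B_Q(a,c)) f(c)`, where `α(a) = S(a)/S(1)`. -/
theorem weil_representation_truncPoly
    {k : Type*} [Field k] [Fintype k] (hodd : Odd (Fintype.card k))
    {m : ℕ} (hm : 0 < m) (hmodd : Odd m) [Fintype (TruncPoly k m)]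
    (σ : TruncPoly k m →ₐ[k] TruncPoly k m) (hσ : σ (xbar k m) = -xbar k m)
    (tr : TruncPoly k m →ₗ[k] k)
    (htr : ∀ i < m, tr (Ideal.Quotient.mk _ ((Polynomial.X : Polynomial k) ^ i))
      = if i = m - 1 then 1 else 0)
    (ψ : AddChar k ℂ) (hψ : ∃ x : k, ψ x ≠ 1) :
    ∃ (hmul : ∀ g ∈ SLstarSet (⇑σ), ∀ g' ∈ SLstarSet (⇑σ), g * g' ∈ SLstarSet (⇑σ))
      (hh : ∀ t : (TruncPoly k m)ˣ,
        hM (σ : TruncPoly k m →* TruncPoly k m) t ∈ SLstarSet (⇑σ))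
      (hu : ∀ b : TruncPoly k m, σ b = b → uM b ∈ SLstarSet (⇑σ))
      (hw : wM (TruncPoly k m) ∈ SLstarSet (⇑σ)),
      ∃ ρ : ↥(SLstarSet (⇑σ)) → ((TruncPoly k m → ℂ) ≃ₗ[ℂ] (TruncPoly k m → ℂ)),
        (∀ g g' : ↥(SLstarSet (⇑σ)),
          ρ ⟨(g : Matrix (Fin 2) (Fin 2) (TruncPoly k m)) *
               (g' : Matrix (Fin 2) (Fin 2) (TruncPoly k m)),
             hmul g g.2 g' g'.2⟩ = ρ g * ρ g') ∧
        (∀ (t : (TruncPoly k m)ˣ) (f : TruncPoly k m → ℂ) (a : TruncPoly k m),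
          ρ ⟨hM (σ : TruncPoly k m →* TruncPoly k m) t, hh t⟩ f a
            = (gaussS σ tr ψ (t : TruncPoly k m) / gaussS σ tr ψ 1) * f (a * t)) ∧
        (∀ (b : TruncPoly k m) (hb : σ b = b) (f : TruncPoly k m → ℂ) (a : TruncPoly k m),
          ρ ⟨uM b, hu b hb⟩ f a = ψ (tr (b * (σ a * a))) * f a) ∧
        (∀ (f : TruncPoly k m → ℂ) (a : TruncPoly k m),
          ρ ⟨wM (TruncPoly k m), hw⟩ f a
            = ((gaussS σ tr ψ (-1) / gaussS σ tr ψ 1) / gaussS σ tr ψ 1) *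
                ∑ c : TruncPoly k m, ψ (tr (σ a * c + a * σ c)) * f c) := by
  have hnt : Nontrivial (TruncPoly k m) := by
    refine ⟨Ideal.Quotient.mk _ ((Polynomial.X : Polynomial k) ^ (m - 1)), 0, fun h => ?_⟩
    have h1 := htr (m - 1) (by omega)
    rw [h, map_zero, if_pos rfl] at h1
    exact zero_ne_one h1
  have h2k : (2 : k) ≠ 0 := by
    refine Ring.two_ne_zero ?_
    intro h
    have := FiniteField.even_card_iff_char_two.mp h
    rw [Nat.odd_iff] at hodd
    omega
  have H : WD σ (ψ.compAddMonoidHom tr.toAddMonoidHom) := by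
    refine ⟨tp_inv σ hσ, fun a => ?_, ?_, ?_, tp_nil⟩
    · show ψ (tr (σ a)) = ψ (tr a)
      rw [tp_tr_sig hm hmodd σ hσ tr htr]
    · intro a ha h
      apply ha
      refine tp_nd hm tr htr ψ hψ a fun c => ?_
      exact DFunLike.congr_fun h c
    · have := (Ne.isUnit h2k).map (algebraMap k (TruncPoly k m))
      rwa [map_ofNat] at this
  exact H.main hodd
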